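/- arXiv:2008.03271 — 5 statements merged into one kernel-verified Lean document; each statement's English description precedes it below -/
import Mathlib

section
/- Let f_Normal(ξ | log y, y⁻¹) be the Gaussian density with mean log y and variance 1/y, and let f_logGamma(ξ | y, 1) be the log-Gamma density with parameters y and 1. Then the Kullback–Leibler divergence satisfies D(f_Normal(·|log y, y⁻¹) ‖ f_logGamma(·|y,1)) = 5/(24y) + O(y⁻²) as y → ∞; precisely, there exist constants C > 0 and Y₀ > 0 such that for all real y ≥ Y₀, |D(f_Normal(·|log y, y⁻¹) ‖ f_logGamma(·|y,1)) − 5/(24y)| ≤ C/y². -/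
open Real MeasureTheory

/-- Gaussian density with mean `m` and variance `v`. -/
noncomputable def fNormal (m v ξ : ℝ) : ℝ :=
  (Real.sqrt (2 * Real.pi * v))⁻¹ * Real.exp (-(ξ - m) ^ 2 / (2 * v))

/-- log-Gamma density with parameters `r` and `s`. -/
noncomputable def fLogGamma (r s ξ : ℝ) : ℝ :=
  (Real.Gamma r * s ^ r)⁻¹ * Real.exp (r * ξ - Real.exp ξ / s)

/-- Kullback–Leibler divergence between densities `f` and `g` on `ℝ`. -/
noncomputable def KL (f g : ℝ → ℝ) : ℝ :=
  ∫ ξ : ℝ, f ξ * Real.log (f ξ / g ξ)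

/-- Remainder in Stirling's formula. -/
noncomputable def stirMu (y : ℝ) : ℝ :=
  Real.log (Real.Gamma y) - (y - 1/2) * Real.log y + y - 1/2 * Real.log (2 * Real.pi) - 1 / (12 * y)

lemma logGamma_add_one (y : ℝ) (hy : 0 < y) :
    Real.log (Real.Gamma (y + 1)) = Real.log (Real.Gamma y) + Real.log y := by
  rw [Real.Gamma_add_one hy.ne', Real.log_mul hy.ne' (Real.Gamma_pos_of_pos hy).ne']
  ring

lemma logGamma_add_nat (y : ℝ) (hy : 0 < y) (n : ℕ) :
    Real.log (Real.Gamma (y + n)) =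
      Real.log (Real.Gamma y) + ∑ m ∈ Finset.range n, Real.log (y + m) := by
  induction n with
  | zero => simp
  | succ k ih =>
    rw [Finset.sum_range_succ, ← add_assoc, ← ih]
    push_cast
    rw [← add_assoc, logGamma_add_one _ (by positivity)]

lemma stirMu_step (y : ℝ) (hy : 2 ≤ y) : |stirMu (y + 1) - stirMu y| ≤ 5 / y ^ 3 := by
  have hy0 : 0 < y := by linarith
  obtain ⟨x, hx⟩ : ∃ x, x = 1 / y := ⟨_, rfl⟩
  have hx0 : 0 < x := by rw [hx]; positivity
  have hx2 : x ≤ 1 / 2 := by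
    rw [hx]; exact one_div_le_one_div_of_le (by norm_num) hy
  have hyx : y = 1 / x := by rw [hx]; field_simp
  have hlog : Real.log (y + 1) = Real.log y + Real.log (1 + x) := by
    rw [← Real.log_mul hy0.ne' (by positivity), hx]
    congr 1
    field_simp
  have hb := Real.abs_log_sub_add_sum_range_le (x := -x) (by rw [abs_neg, abs_of_pos hx0]; linarith) 3
  rw [abs_neg, abs_of_pos hx0] at hb
  simp only [Finset.sum_range_succ, Finset.sum_range_zero] at hb
  norm_num at hb
  have hb2 : x ^ 4 / (1 - x) ≤ 2 * x ^ 4 := by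
    rw [div_le_iff₀ (by linarith)]
    nlinarith [pow_pos hx0 4]
  obtain ⟨e, he⟩ : ∃ e, e = Real.log (1 + x) - (x - x ^ 2 / 2 + x ^ 3 / 3) := ⟨_, rfl⟩
  have he2 : |e| ≤ 2 * x ^ 4 := by
    refine le_trans (le_of_eq ?_) (hb.trans hb2)
    rw [he]; congr 1; ring
  have hl : Real.log (1 + x) = (x - x ^ 2 / 2 + x ^ 3 / 3) + e := by rw [he]; ring
  have key : stirMu (y + 1) - stirMu y =
      -(x ^ 3 / (12 * (1 + x))) - x ^ 3 / 6 - (1 / x + 1 / 2) * e := by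
    unfold stirMu
    rw [logGamma_add_one y hy0, hlog, hl, hyx]
    field_simp
    ring
  have h5 : 5 / y ^ 3 = 5 * x ^ 3 := by rw [hyx]; field_simp
  rw [key, h5]
  have hx3 := pow_pos hx0 3
  have h1 : x ^ 3 / (12 * (1 + x)) ≤ x ^ 3 / 12 := by
    apply div_le_div_of_nonneg_left hx3.le (by norm_num) (by linarith)
  have h1' : 0 ≤ x ^ 3 / (12 * (1 + x)) := by positivity
  have h2 : |(1 / x + 1 / 2) * e| ≤ 3 * x ^ 3 := by
    rw [abs_mul, abs_of_pos (by positivity)]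
    calc (1 / x + 1 / 2) * |e| ≤ (1 / x + 1 / 2) * (2 * x ^ 4) := by gcongr
      _ = 2 * x ^ 3 + x ^ 4 := by field_simp
      _ ≤ 3 * x ^ 3 := by nlinarith
  rw [abs_le] at h2 ⊢
  constructor <;> linarith [h2.1, h2.2]

open Filter Topology in
lemma stirMu_tendsto (y : ℝ) (hy : 0 < y) :
    Tendsto (fun n : ℕ => stirMu (y + ((n + 1 : ℕ) : ℝ))) atTop (𝓝 0) := by
  have hS := Real.BohrMollerup.tendsto_log_gamma hy
  have hT : Tendsto (fun n => Real.log (Stirling.stirlingSeq n)) atTop (𝓝 (Real.log (√π))) :=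
    (Real.continuousAt_log (by positivity)).tendsto.comp Stirling.tendsto_stirlingSeq_sqrt_pi
  have hA : Tendsto (fun n : ℕ => (n : ℝ) * Real.log (1 + (y + 1) / n)) atTop (𝓝 (y + 1)) :=
    (Real.tendsto_mul_log_one_add_div_atTop (y + 1)).comp tendsto_natCast_atTop_atTop
  have hD : Tendsto (fun n : ℕ => (y + 1) / (n : ℝ)) atTop (𝓝 0) :=
    tendsto_const_nhds.div_atTop tendsto_natCast_atTop_atTop
  have hB : Tendsto (fun n : ℕ => Real.log (1 + (y + 1) / n)) atTop (𝓝 0) := by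
    have h1 : Tendsto (fun n : ℕ => 1 + (y + 1) / (n : ℝ)) atTop (𝓝 1) := by
      simpa using hD.const_add 1
    have h2 := (Real.continuousAt_log one_ne_zero).tendsto.comp h1
    rw [Real.log_one] at h2
    exact h2
  have hE : Tendsto (fun n : ℕ => 1 / (12 * (y + ((n + 1 : ℕ) : ℝ)))) atTop (𝓝 0) := by
    apply tendsto_const_nhds.div_atTop
    apply Tendsto.const_mul_atTop (by norm_num)
    apply tendsto_atTop_add_const_left
    exact tendsto_natCast_atTop_atTop.comp (tendsto_add_atTop_nat 1)
  have hsum := ((((hS.const_sub (Real.log (Real.Gamma y))).add (hT.sub_const (Real.log (√π)))).add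
    (hA.const_sub (y + 1))).sub (hB.const_mul (y + 1/2))).sub hE
  have h0 : Real.log (Real.Gamma y) - Real.log (Real.Gamma y) + (Real.log (√π) - Real.log (√π))
      + (y + 1 - (y + 1)) - (y + 1/2) * 0 - 0 = 0 := by ring
  rw [h0] at hsum
  refine hsum.congr' ?_
  filter_upwards [eventually_gt_atTop 0] with n hn
  have hn' : (0 : ℝ) < n := by exact_mod_cast hn
  have hlog : Real.log (y + ((n + 1 : ℕ) : ℝ)) = Real.log n + Real.log (1 + (y + 1) / n) := by
    rw [← Real.log_mul hn'.ne' (by positivity)]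
    congr 1
    push_cast
    field_simp
    ring
  unfold stirMu
  rw [logGamma_add_nat y hy, Stirling.log_stirlingSeq_formula, Real.BohrMollerup.logGammaSeq, hlog,
    Real.log_sqrt Real.pi_pos.le, Real.log_mul two_ne_zero Real.pi_pos.ne',
    Real.log_mul two_ne_zero hn'.ne', Real.log_div hn'.ne' (Real.exp_pos 1).ne', Real.log_exp]
  push_cast
  ring

lemma stirMu_telescope (y : ℝ) (hy : 2 ≤ y) (n : ℕ) :
    |stirMu (y + n) - stirMu y| ≤ 5 / (y - 1) ^ 2 - 5 / (y + n - 1) ^ 2 := by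
  induction n with
  | zero => simp
  | succ k ih =>
    have hz : 2 ≤ y + k := by have : (0 : ℝ) ≤ k := k.cast_nonneg; linarith
    obtain ⟨z, hzz⟩ : ∃ z, z = y + k := ⟨_, rfl⟩
    rw [← hzz] at ih hz
    have h1 := stirMu_step z hz
    have h2 : 5 / z ^ 3 ≤ 5 / (z - 1) ^ 2 - 5 / z ^ 2 := by
      have hz1 : 0 < z - 1 := by linarith
      have hz0 : 0 < z := by linarith
      rw [div_sub_div _ _ (by positivity) (by positivity),
        div_le_div_iff₀ (by positivity) (by positivity)]
      have : (5 * z ^ 2 - (z - 1) ^ 2 * 5) * z ^ 3 - 5 * ((z - 1) ^ 2 * z ^ 2)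
        = 5 * z ^ 2 * (z ^ 2 + z - 1) := by ring
      have h3 : 0 ≤ 5 * z ^ 2 * (z ^ 2 + z - 1) := by
        apply mul_nonneg (by positivity); nlinarith
      linarith
    have e1 : y + ((k + 1 : ℕ) : ℝ) = z + 1 := by rw [hzz]; push_cast; ring
    rw [e1, show z + 1 - 1 = z by ring]
    have := abs_sub_le (stirMu (z + 1)) (stirMu z) (stirMu y)
    linarith

open Filter Topology in
lemma stirMu_bound (y : ℝ) (hy : 2 ≤ y) : |stirMu y| ≤ 20 / y ^ 2 := by
  have h1 : |stirMu y| ≤ 5 / (y - 1) ^ 2 := by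
    have hl : Tendsto (fun n : ℕ => |stirMu (y + ((n + 1 : ℕ) : ℝ)) - stirMu y|) atTop
        (𝓝 |0 - stirMu y|) := ((stirMu_tendsto y (by linarith)).sub_const _).abs
    rw [zero_sub, abs_neg] at hl
    refine le_of_tendsto' hl fun n => ?_
    have := stirMu_telescope y hy (n + 1)
    have h0 : 0 ≤ 5 / (y + ((n + 1 : ℕ) : ℝ) - 1) ^ 2 := by positivity
    linarith
  refine h1.trans ?_
  have : 0 < y - 1 := by linarith
  rw [div_le_div_iff₀ (by positivity) (by positivity)]
  nlinarith

open ProbabilityTheory in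
lemma KL_eq (y : ℝ) (hy : 0 < y) :
    KL (fNormal (Real.log y) y⁻¹) (fLogGamma y 1) =
      -(1/2) * Real.log (2 * Real.pi / y) - 1/2 + Real.log (Real.Gamma y) - y * Real.log y
        + y * Real.exp (1 / (2 * y)) := by
  let v : NNReal := ⟨y⁻¹, by positivity⟩
  have hvc : (v : ℝ) = y⁻¹ := rfl
  have hv : v ≠ 0 := by
    intro h
    have : (v : ℝ) = 0 := by rw [h]; rfl
    rw [hvc] at this
    exact (inv_pos.2 hy).ne' this
  have hG := Real.Gamma_pos_of_pos hy
  have hpt : ∀ ξ : ℝ, Real.log (fNormal (Real.log y) y⁻¹ ξ / fLogGamma y 1 ξ) =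
      (-(1/2) * Real.log (2 * Real.pi / y) + Real.log (Real.Gamma y)) -
        y / 2 * (ξ - Real.log y) ^ 2 - y * ξ + Real.exp (1 * ξ) := by
    intro ξ
    unfold fNormal fLogGamma
    rw [Real.one_rpow, mul_one, div_one, ← div_eq_mul_inv (2 * Real.pi) y]
    have hs : 0 < √(2 * Real.pi / y) := by positivity
    rw [Real.log_div (by positivity) (by positivity), Real.log_mul (by positivity) (by positivity),
      Real.log_mul (by positivity) (by positivity), Real.log_inv, Real.log_inv, Real.log_exp,
      Real.log_exp, Real.log_sqrt (by positivity), one_mul]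
    field_simp
    ring
  have hKL : KL (fNormal (Real.log y) y⁻¹) (fLogGamma y 1) =
      ∫ ξ, ((-(1/2) * Real.log (2 * Real.pi / y) + Real.log (Real.Gamma y)) -
        y / 2 * (ξ - Real.log y) ^ 2 - y * ξ + Real.exp (1 * ξ)) ∂(gaussianReal (Real.log y) v) := by
    rw [integral_gaussianReal_eq_integral_smul hv]
    unfold KL
    congr 1
    ext ξ
    rw [hpt ξ]
    rfl
  have i1 : Integrable (fun ξ : ℝ => ξ) (gaussianReal (Real.log y) v) :=
    (memLp_id_gaussianReal (μ := Real.log y) (v := v) 1).integrable (by simp)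
  have i2 : Integrable (fun ξ : ℝ => (ξ - Real.log y) ^ 2) (gaussianReal (Real.log y) v) := by
    have := (memLp_id_gaussianReal (μ := Real.log y) (v := v) 2).sub
      (memLp_const (Real.log y))
    exact this.integrable_sq
  have i3 := integrable_exp_mul_gaussianReal (μ := Real.log y) (v := v) 1
  have e1 : ∫ ξ, ξ ∂(gaussianReal (Real.log y) v) = Real.log y := integral_id_gaussianReal
  have e2 : ∫ ξ, (ξ - Real.log y) ^ 2 ∂(gaussianReal (Real.log y) v) = y⁻¹ := by
    have := variance_fun_id_gaussianReal (μ := Real.log y) (v := v)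
    rw [variance_eq_integral measurable_id'.aemeasurable] at this
    simp only [integral_id_gaussianReal] at this
    rw [this, hvc]
  have e3 : ∫ ξ, Real.exp (1 * ξ) ∂(gaussianReal (Real.log y) v) =
      y * Real.exp (1 / (2 * y)) := by
    have := congrFun (mgf_fun_id_gaussianReal (μ := Real.log y) (v := v)) 1
    rw [mgf] at this
    rw [this, hvc, Real.exp_add, mul_one, Real.exp_log hy]
    congr 2
    field_simp
  have c : Integrable (fun _ : ℝ => -(1/2) * Real.log (2 * Real.pi / y) + Real.log (Real.Gamma y))
    (gaussianReal (Real.log y) v) := integrable_const _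
  have j2 := i2.const_mul (y / 2)
  have j1 := i1.const_mul y
  have k1 : Integrable (fun ξ : ℝ => -(1/2) * Real.log (2 * Real.pi / y) + Real.log (Real.Gamma y) -
    y / 2 * (ξ - Real.log y) ^ 2) (gaussianReal (Real.log y) v) := c.sub j2
  have k2 : Integrable (fun ξ : ℝ => -(1/2) * Real.log (2 * Real.pi / y) + Real.log (Real.Gamma y) -
    y / 2 * (ξ - Real.log y) ^ 2 - y * ξ) (gaussianReal (Real.log y) v) := k1.sub j1
  rw [hKL, integral_add k2 i3, integral_sub k1 j1, integral_sub c j2,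
    integral_const_mul, integral_const_mul, e1, e2, e3]
  simp
  field_simp
  ring

theorem kl_normal_logGamma_asymptotic :
    ∃ C > (0 : ℝ), ∃ Y₀ > (0 : ℝ), ∀ y : ℝ, Y₀ ≤ y →
      |KL (fNormal (Real.log y) y⁻¹) (fLogGamma y 1) - 5 / (24 * y)| ≤ C / y ^ 2 := by
  refine ⟨21, by norm_num, 2, by norm_num, fun y hy => ?_⟩
  have hy0 : 0 < y := by linarith
  have hu0 : 0 < 1 / (2 * y) := by positivity
  have hu1 : 1 / (2 * y) ≤ 1 := by
    rw [div_le_one (by positivity)]; linarith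
  have hb := Real.exp_bound (x := 1 / (2 * y)) (by rwa [abs_of_pos hu0]) (n := 3) (by norm_num)
  rw [abs_of_pos hu0] at hb
  simp only [Finset.sum_range_succ, Finset.sum_range_zero] at hb
  norm_num [Nat.factorial] at hb
  have hm := stirMu_bound y hy
  obtain ⟨e, he⟩ : ∃ e, e = Real.exp (1 / (2 * y)) - (1 + 1 / (2 * y) + (1 / (2 * y)) ^ 2 / 2) :=
    ⟨_, rfl⟩
  have he2 : |e| ≤ 1 / y ^ 3 := by
    have h1 : |e| ≤ (1 / (2 * y)) ^ 3 * (2 / 9) := by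
      rw [he]
      convert hb using 1
      · congr 1; norm_num
      · norm_num
    refine h1.trans ?_
    rw [div_pow, mul_pow, div_mul_div_comm, div_le_div_iff₀ (by positivity) (by positivity)]
    nlinarith [pow_pos hy0 3]
  have hl : Real.exp (1 / (2 * y)) = (1 + 1 / (2 * y) + (1 / (2 * y)) ^ 2 / 2) + e := by
    rw [he]; ring
  have key : KL (fNormal (Real.log y) y⁻¹) (fLogGamma y 1) - 5 / (24 * y) = stirMu y + y * e := by
    rw [KL_eq y hy0, hl, stirMu, Real.log_div (by positivity) hy0.ne']
    field_simp
    ring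
  rw [key]
  have h3 : |y * e| ≤ 1 / y ^ 2 := by
    rw [abs_mul, abs_of_pos hy0]
    calc y * |e| ≤ y * (1 / y ^ 3) := by gcongr
      _ = 1 / y ^ 2 := by field_simp
  calc _ ≤ |stirMu y| + |y * e| := abs_add_le _ _
    _ ≤ 20 / y ^ 2 + 1 / y ^ 2 := add_le_add hm h3
    _ = 21 / y ^ 2 := by ring
end

section
/- For every real y > 0, the Kullback–Leibler divergence between the Gaussian density with mean log y and variance 1/y and the log-Gamma density with parameters y and 1 has the closed form D(f_Normal(·|log y, y⁻¹) ‖ f_logGamma(·|y,1)) = log(Γ(y)/√(2π/y)) − y·log y + y·e^(1/(2y)) − 1/2. -/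
open Real MeasureTheory Filter

theorem kl_normal_logGamma_closed_form (y : ℝ) (hy : 0 < y) :
    KL (fNormal (Real.log y) y⁻¹) (fLogGamma y 1) =
      Real.log (Real.Gamma y / Real.sqrt (2 * Real.pi / y)) - y * Real.log y +
        y * Real.exp (1 / (2 * y)) - 1 / 2 := by
  obtain ⟨v, hv⟩ : ∃ v : NNReal, (v : ℝ) = y⁻¹ := ⟨⟨y⁻¹, (inv_pos.mpr hy).le⟩, rfl⟩
  have hv0 : v ≠ 0 := by
    intro h
    rw [h] at hv
    have := inv_pos.mpr hy
    simp at hv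
    exact hy.ne hv
  have hG := Real.Gamma_pos_of_pos hy
  have hS : 0 < Real.sqrt (2 * Real.pi / y) := Real.sqrt_pos.mpr (by positivity)
  have key : KL (fNormal (Real.log y) y⁻¹) (fLogGamma y 1) =
      ∫ ξ, (Real.log (Real.Gamma y / Real.sqrt (2 * Real.pi / y)) - y / 2 * (ξ - Real.log y) ^ 2
        - y * ξ + Real.exp (1 * ξ)) ∂ProbabilityTheory.gaussianReal (Real.log y) v := by
    rw [ProbabilityTheory.integral_gaussianReal_eq_integral_smul hv0]
    unfold KL
    congr 1
    ext ξ
    have e1 : ProbabilityTheory.gaussianPDFReal (Real.log y) v ξ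
        = fNormal (Real.log y) y⁻¹ ξ := by
      rw [ProbabilityTheory.gaussianPDFReal_def, fNormal, hv]
    rw [e1, smul_eq_mul]
    congr 1
    have e2 : fNormal (Real.log y) y⁻¹ ξ / fLogGamma y 1 ξ =
        (Real.Gamma y / Real.sqrt (2 * Real.pi / y)) *
          Real.exp (- (y / 2 * (ξ - Real.log y) ^ 2) - y * ξ + Real.exp (1 * ξ)) := by
      have e3 : - (y / 2 * (ξ - Real.log y) ^ 2) - y * ξ + Real.exp (1 * ξ) =
          -(ξ - Real.log y) ^ 2 / (2 * y⁻¹) - (y * ξ - Real.exp ξ / 1) := by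
        rw [one_mul]
        field_simp
        ring
      rw [e3, Real.exp_sub, fNormal, fLogGamma, Real.one_rpow, mul_one, ← div_eq_mul_inv]
      field_simp
    rw [e2, Real.log_mul (by positivity) (Real.exp_pos _).ne', Real.log_exp]
    ring
  have hL := ProbabilityTheory.memLp_id_gaussianReal' (μ := Real.log y) (v := v) 2 (by simp)
  have i1 : Integrable (fun ξ : ℝ => ξ) (ProbabilityTheory.gaussianReal (Real.log y) v) :=
    hL.integrable (by norm_num)
  have i2 : Integrable (fun ξ : ℝ => (ξ - Real.log y) ^ 2)
      (ProbabilityTheory.gaussianReal (Real.log y) v) :=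
    (hL.sub (memLp_const (Real.log y))).integrable_sq
  have i3 : Integrable (fun ξ : ℝ => Real.exp (1 * ξ))
      (ProbabilityTheory.gaussianReal (Real.log y) v) :=
    ProbabilityTheory.integrable_exp_mul_gaussianReal 1
  have m2 : ∫ ξ, (ξ - Real.log y) ^ 2 ∂ProbabilityTheory.gaussianReal (Real.log y) v = y⁻¹ := by
    have h := ProbabilityTheory.variance_fun_id_gaussianReal (μ := Real.log y) (v := v)
    rw [ProbabilityTheory.variance_eq_integral (by fun_prop),
      ProbabilityTheory.integral_id_gaussianReal, hv] at h
    exact h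
  have m3 : ∫ ξ, Real.exp (1 * ξ) ∂ProbabilityTheory.gaussianReal (Real.log y) v
      = y * Real.exp (1 / (2 * y)) := by
    have h := congrFun (ProbabilityTheory.mgf_fun_id_gaussianReal (μ := Real.log y) (v := v)) 1
    rw [ProbabilityTheory.mgf, hv] at h
    rw [h, Real.exp_add, mul_one, Real.exp_log hy]
    congr 2
    field_simp
  rw [key, integral_add ?_ i3, integral_sub ?_ (i1.const_mul _),
    integral_sub (integrable_const _) (i2.const_mul _), integral_const_mul, integral_const_mul,
    m2, m3, ProbabilityTheory.integral_id_gaussianReal]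
  · simp only [integral_const, probReal_univ, one_smul]
    field_simp
    ring
  · exact (integrable_const _).sub (i2.const_mul _)
  · exact ((integrable_const _).sub (i2.const_mul _)).sub (i1.const_mul _)
end

section
/- The total variation distance between the Gaussian density with mean log y and variance 1/y and the log-Gamma density with parameters y and 1 satisfies TV(f_Normal(·|log y, y⁻¹), f_logGamma(·|y,1)) ≤ √(5/(24y)) + O(y^(−3/2)) as y → ∞; precisely, there exist constants C > 0 and Y₀ > 0 such that for all real y ≥ Y₀, (1/2)∫_ℝ |f_Normal(ξ|log y, y⁻¹) − f_logGamma(ξ|y,1)| dξ ≤ √(5/(24y)) + C·y^(−3/2). -/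
open Real MeasureTheory Filter

lemma log_stirlingSeq_le_aux (n : ℕ) (hn : n ≠ 0) :
    Real.log (Stirling.stirlingSeq n) ≤ Real.log (Real.sqrt Real.pi) + 1 / (12 * (n : ℝ)) := by
  obtain ⟨m, rfl⟩ := Nat.exists_eq_succ_of_ne_zero hn
  have hmono : Monotone (fun k : ℕ => Real.log (Stirling.stirlingSeq (k + 1))
      - 1 / (12 * ((k : ℝ) + 1))) := by
    refine monotone_nat_of_le_succ fun k => ?_
    have h := Stirling.log_stirlingSeq_sdiff_le (k + 1)
    have e : (1 : ℝ) / (12 * ((k + 1 : ℕ) : ℝ) * (((k + 1 : ℕ) : ℝ) + 1))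
        = 1 / (12 * ((k : ℝ) + 1)) - 1 / (12 * (((k + 1 : ℕ) : ℝ) + 1)) := by
      push_cast
      field_simp
      ring
    rw [e] at h
    linarith
  have hs : Tendsto (fun k : ℕ => Real.log (Stirling.stirlingSeq (k + 1))) atTop
      (nhds (Real.log (Real.sqrt Real.pi))) := by
    have h1 := Stirling.tendsto_stirlingSeq_sqrt_pi.comp (tendsto_add_atTop_nat 1)
    exact h1.log (by positivity)
  have h0 : Tendsto (fun k : ℕ => 1 / (12 * ((k : ℝ) + 1))) atTop (nhds 0) := by
    have h1 := (tendsto_one_div_add_atTop_nhds_zero_nat (𝕜 := ℝ)).const_mul (1 / 12 : ℝ)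
    rw [mul_zero] at h1
    refine h1.congr fun k => ?_
    field_simp
  have hlim := hs.sub h0
  rw [sub_zero] at hlim
  have h := hmono.ge_of_tendsto hlim m
  push_cast
  linarith

lemma log_Gamma_le_aux (y : ℝ) (hy : 2 ≤ y) :
    Real.log (Real.Gamma y) ≤
      Real.log (2 * Real.pi) / 2 + (y - 1 / 2) * Real.log y - y + 1 / y := by
  obtain ⟨n, hn1, hn2⟩ : ∃ n : ℕ, (n : ℝ) < y ∧ y ≤ n + 1 := by
    refine ⟨⌈y⌉₊ - 1, ?_, ?_⟩
    · have h1 : 1 ≤ ⌈y⌉₊ := Nat.one_le_ceil_iff.mpr (by linarith)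
      have := Nat.ceil_lt_add_one (show 0 ≤ y by linarith)
      push_cast [Nat.cast_sub h1]
      linarith
    · have h1 : 1 ≤ ⌈y⌉₊ := Nat.one_le_ceil_iff.mpr (by linarith)
      have := Nat.le_ceil y
      push_cast [Nat.cast_sub h1]
      linarith
  have hnpos : (0 : ℝ) < n := by linarith
  have hn0 : n ≠ 0 := by
    rintro rfl
    simp at hnpos
  have hy0 : 0 < y := by linarith
  have hfe : ∀ {z : ℝ}, 0 < z → (Real.log ∘ Real.Gamma) (z + 1)
      = (Real.log ∘ Real.Gamma) z + Real.log z := by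
    intro z hz
    rw [Function.comp_apply, Real.Gamma_add_one hz.ne',
      Real.log_mul hz.ne' (Real.Gamma_pos_of_pos hz).ne', add_comm, Function.comp_apply]
  have h1 := Real.BohrMollerup.f_add_nat_le (f := Real.log ∘ Real.Gamma) (n := n) (x := y - n)
    Real.convexOn_log_Gamma hfe hn0 (by linarith) (by linarith)
  have h2 := hfe hnpos
  simp only [Function.comp_apply, Real.Gamma_nat_eq_factorial] at h1 h2
  rw [show (n : ℝ) + (y - n) = y by ring] at h1
  have h3 := Stirling.log_stirlingSeq_formula n
  have h4 := log_stirlingSeq_le_aux n hn0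
  rw [Real.log_sqrt Real.pi_pos.le] at h4
  rw [Real.log_mul two_ne_zero hnpos.ne', Real.log_div hnpos.ne' (Real.exp_pos 1).ne',
    Real.log_exp] at h3
  rw [Real.log_mul two_ne_zero Real.pi_pos.ne']
  have h5 : Real.log n ≤ Real.log y - (y - n) / y := by
    have h := Real.log_le_sub_one_of_pos (show 0 < (n : ℝ) / y by positivity)
    rw [Real.log_div hnpos.ne' hy0.ne'] at h
    have e : (n : ℝ) / y - 1 = - ((y - n) / y) := by
      field_simp
      ring
    linarith
  have h6 : (y - 1 / 2) * Real.log n ≤ (y - 1 / 2) * (Real.log y - (y - n) / y) :=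
    mul_le_mul_of_nonneg_left h5 (by linarith)
  have h7 : (y - 1 / 2) * (Real.log y - (y - n) / y)
      = (y - 1 / 2) * Real.log y - (y - n) + (y - n) / (2 * y) := by
    field_simp
    ring
  have h8 : (y - n) / (2 * y) + 1 / (12 * (n : ℝ)) ≤ 1 / y := by
    have a : (y - n) / (2 * y) ≤ 1 / (2 * y) := by
      gcongr
      linarith
    have b : 1 / (12 * (n : ℝ)) ≤ 1 / (6 * y) := by
      apply one_div_le_one_div_of_le <;> linarith
    have c : 1 / (2 * y) + 1 / (6 * y) ≤ 1 / y := by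
      have : 1 / (2 * y) + 1 / (6 * y) = (2 / 3) * (1 / y) := by
        field_simp
        norm_num
      rw [this]
      have : 0 < 1 / y := by positivity
      linarith
    linarith
  linarith

lemma Gamma_bound_aux (y : ℝ) (hy : 2 ≤ y) :
    (Real.sqrt (2 * Real.pi * y⁻¹))⁻¹ * (1 - 1 / y) ≤
      Real.exp (y * Real.log y - y) / Real.Gamma y := by
  have hy0 : 0 < y := by linarith
  have hG := Real.Gamma_pos_of_pos hy0
  have h := log_Gamma_le_aux y hy
  rw [le_div_iff₀ hG]
  have h1 : Real.Gamma y ≤ Real.exp (Real.log (2 * Real.pi) / 2 + (y - 1 / 2) * Real.log y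
      - y + 1 / y) := by
    rw [← Real.exp_log hG]
    exact Real.exp_le_exp.mpr h
  have h2 : 1 - 1 / y ≤ Real.exp (-(1 / y)) := by
    have := Real.add_one_le_exp (-(1 / y))
    linarith
  have h3 : (Real.sqrt (2 * Real.pi * y⁻¹))⁻¹
      = Real.exp (-(Real.log (2 * Real.pi) / 2) + Real.log y / 2) := by
    have hp : 0 < 2 * Real.pi * y⁻¹ := by positivity
    rw [← Real.exp_log (show 0 < (Real.sqrt (2 * Real.pi * y⁻¹))⁻¹ by positivity)]
    rw [Real.log_inv, Real.log_sqrt hp.le, Real.log_mul (by positivity) (by positivity),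
      Real.log_inv]
    congr 1
    ring
  rw [h3]
  calc _ ≤ Real.exp (-(Real.log (2 * Real.pi) / 2) + Real.log y / 2) * Real.exp (-(1 / y))
        * Real.exp (Real.log (2 * Real.pi) / 2 + (y - 1 / 2) * Real.log y - y + 1 / y) := by
        gcongr
    _ = _ := by
        rw [← Real.exp_add, ← Real.exp_add]
        congr 1
        ring

lemma exp_le_quad_of_nonpos (t : ℝ) (ht : t ≤ 0) : Real.exp t ≤ 1 + t + t ^ 2 / 2 := by
  have hm : AntitoneOn (fun x : ℝ => 1 + x + x ^ 2 / 2 - Real.exp x) (Set.Iic 0) := by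
    apply antitoneOn_of_deriv_nonpos (convex_Iic 0) (by fun_prop) (by fun_prop)
    intro x _
    have hd : HasDerivAt (fun x : ℝ => 1 + x + x ^ 2 / 2 - Real.exp x)
        (0 + 1 + (2 * x) / 2 - Real.exp x) x := by
      have h2 : HasDerivAt (fun x : ℝ => x ^ 2) (2 * x) x := by
        simpa using hasDerivAt_pow 2 x
      exact (((hasDerivAt_const x (1 : ℝ)).add (hasDerivAt_id x)).add
        (h2.div_const 2)).sub (Real.hasDerivAt_exp x)
    rw [hd.deriv]
    have := Real.add_one_le_exp x
    linarith
  have := hm (Set.mem_Iic.mpr ht) (Set.mem_Iic.mpr le_rfl) ht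
  simp at this
  linarith

lemma exp_le_cubic_of_mem (t : ℝ) (h0 : 0 ≤ t) (h1 : t ≤ 1) :
    Real.exp t ≤ 1 + t + t ^ 2 / 2 + t ^ 3 / 2 := by
  have h := Real.exp_bound' h0 h1 (n := 3) (by norm_num)
  simp [Finset.sum_range_succ, Nat.factorial] at h
  have : 0 ≤ t ^ 3 := by positivity
  nlinarith

lemma integral_fLogGamma_aux (y : ℝ) (hy : 0 < y) : ∫ ξ : ℝ, fLogGamma y 1 ξ = 1 := by
  have hG := Real.Gamma_pos_of_pos hy
  have key : ∫ ξ : ℝ, Real.exp (y * ξ - Real.exp ξ) = Real.Gamma y := by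
    rw [Real.Gamma_eq_integral hy]
    have h := integral_image_eq_integral_abs_deriv_smul (s := Set.univ) (f := Real.exp)
      (f' := Real.exp) MeasurableSet.univ (fun x _ => (Real.hasDerivAt_exp x).hasDerivWithinAt)
      Real.exp_injective.injOn (fun x => Real.exp (-x) * x ^ (y - 1))
    rw [Set.image_univ, Real.range_exp, Measure.restrict_univ] at h
    rw [h]
    congr 1
    ext ξ
    rw [abs_of_pos (Real.exp_pos ξ), smul_eq_mul, ← Real.exp_mul, ← Real.exp_add, ← Real.exp_add]
    congr 1
    ring
  simp only [fLogGamma, Real.one_rpow, mul_one, div_one]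
  rw [integral_const_mul, key, inv_mul_cancel₀ hG.ne']

lemma integral_fNormal_aux (m v : ℝ) (hv : 0 < v) : ∫ ξ : ℝ, fNormal m v ξ = 1 := by
  simp only [fNormal]
  rw [integral_const_mul,
    integral_sub_right_eq_self (fun x : ℝ => Real.exp (-x ^ 2 / (2 * v))) m]
  have := integral_gaussian (1 / (2 * v))
  have e : (fun x : ℝ => Real.exp (-x ^ 2 / (2 * v)))
      = fun x : ℝ => Real.exp (-(1 / (2 * v)) * x ^ 2) := by
    ext x
    congr 1
    ring
  rw [e, this]
  have e2 : Real.pi / (1 / (2 * v)) = 2 * Real.pi * v := by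
    field_simp
  rw [e2, inv_mul_cancel₀]
  positivity

/-- The dominating cubic term. -/
noncomputable def cubicTerm (y t : ℝ) : ℝ :=
  (Set.Ioi (0 : ℝ)).indicator
    (fun t => (Real.sqrt (2 * Real.pi * y⁻¹))⁻¹ * (y / 2) *
      (t ^ (3 : ℝ) * Real.exp (-(y / 2) * t ^ (2 : ℝ)))) t

lemma cubicTerm_integrable (y : ℝ) (hy : 0 < y) : Integrable (cubicTerm y) := by
  have h := (integrableOn_rpow_mul_exp_neg_mul_rpow (p := 2) (s := 3) (b := y / 2)
    (by norm_num) (by norm_num) (by positivity)).const_mul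
      ((Real.sqrt (2 * Real.pi * y⁻¹))⁻¹ * (y / 2))
  exact (integrable_indicator_iff measurableSet_Ioi).mpr h

lemma cubicTerm_integral (y : ℝ) (hy : 0 < y) :
    ∫ t, cubicTerm y t = (Real.sqrt (2 * Real.pi * y⁻¹))⁻¹ / y := by
  unfold cubicTerm
  rw [integral_indicator measurableSet_Ioi, integral_const_mul,
    integral_rpow_mul_exp_neg_mul_rpow (by norm_num) (by norm_num) (by positivity)]
  have e : (y / 2) ^ (-((3 : ℝ) + 1) / 2) = ((y / 2) ^ 2)⁻¹ := by
    rw [show (-((3 : ℝ) + 1) / 2) = -(2 : ℕ) by norm_num, Real.rpow_neg (by positivity),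
      Real.rpow_natCast]
  rw [e, show ((3 : ℝ) + 1) / 2 = 2 by norm_num, Real.Gamma_two]
  field_simp

lemma pointwise_aux (y ξ : ℝ) (hy : 2 ≤ y) :
    fNormal (Real.log y) y⁻¹ ξ - fLogGamma y 1 ξ ≤
      (1 / y) * fNormal (Real.log y) y⁻¹ ξ + cubicTerm y (ξ - Real.log y) := by
  have hy0 : 0 < y := by linarith
  obtain ⟨t, rfl⟩ : ∃ t, ξ = t + Real.log y := ⟨ξ - Real.log y, by ring⟩
  have hG := Gamma_bound_aux y hy
  have hA : 0 < (Real.sqrt (2 * Real.pi * y⁻¹))⁻¹ := by positivity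
  have eN : fNormal (Real.log y) y⁻¹ (t + Real.log y)
      = (Real.sqrt (2 * Real.pi * y⁻¹))⁻¹ * Real.exp (-(y / 2) * t ^ 2) := by
    simp only [fNormal, add_sub_cancel_right]
    congr 2
    field_simp
  have eG : fLogGamma y 1 (t + Real.log y)
      = Real.exp (y * Real.log y - y) / Real.Gamma y
        * (Real.exp (-(y / 2) * t ^ 2)
          * Real.exp (-(y * (Real.exp t - 1 - t - t ^ 2 / 2)))) := by
    simp only [fLogGamma, Real.one_rpow, mul_one, div_one]
    rw [div_mul_eq_mul_div, div_eq_inv_mul, ← Real.exp_add, ← Real.exp_add, Real.exp_add t,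
      Real.exp_log hy0]
    congr 2
    ring
  rw [eN, eG, add_sub_cancel_right]
  set A := (Real.sqrt (2 * Real.pi * y⁻¹))⁻¹ with hAdef
  set E := Real.exp (-(y / 2) * t ^ 2) with hE
  set W := Real.exp (-(y * (Real.exp t - 1 - t - t ^ 2 / 2))) with hW
  have hEpos : 0 < E := Real.exp_pos _
  have hWpos : 0 < W := Real.exp_pos _
  have h1 : A * (1 - 1 / y) * (E * W) ≤ Real.exp (y * Real.log y - y) / Real.Gamma y * (E * W) :=
    mul_le_mul_of_nonneg_right hG (by positivity)
  have hk0 : 0 < 1 / y := by positivity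
  have hk1 : 1 / y ≤ 1 := by
    rw [div_le_one hy0]
    linarith
  -- reduce to an estimate of `1 - W`
  suffices hs : A * E * (1 - 1 / y) * (1 - W) ≤ cubicTerm y t by
    nlinarith
  rcases le_or_gt t 0 with ht | ht
  · have hc : cubicTerm y t = 0 := by
      simp [cubicTerm, ht]
    rw [hc]
    have hq := exp_le_quad_of_nonpos t ht
    have : 1 ≤ W := by
      rw [hW]
      apply Real.one_le_exp
      nlinarith
    have h2 : 0 ≤ A * E * (1 - 1 / y) := mul_nonneg (by positivity) (by linarith)
    nlinarith
  · have hc : cubicTerm y t = A * E * (y * t ^ 3 / 2) := by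
      simp only [cubicTerm]
      rw [Set.indicator_of_mem (Set.mem_Ioi.mpr ht)]
      rw [show (3 : ℝ) = ((3 : ℕ) : ℝ) by norm_num, Real.rpow_natCast, Real.rpow_two]
      rw [hE, hAdef]
      ring
    rw [hc]
    have h2 : 1 - W ≤ y * t ^ 3 / 2 := by
      rcases le_or_gt t 1 with h | h
      · have h3 := exp_le_cubic_of_mem t ht.le h
        have h4 := Real.add_one_le_exp (-(y * (Real.exp t - 1 - t - t ^ 2 / 2)))
        rw [← hW] at h4
        nlinarith
      · have : 1 ≤ t ^ 3 := one_le_pow₀ h.le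
        nlinarith
    have h3 : 0 ≤ y * t ^ 3 / 2 := by positivity
    have h4 : (1 - 1 / y) * (1 - W) ≤ y * t ^ 3 / 2 := by
      nlinarith
    calc A * E * (1 - 1 / y) * (1 - W) = A * E * ((1 - 1 / y) * (1 - W)) := by ring
      _ ≤ _ := mul_le_mul_of_nonneg_left h4 (by positivity)

lemma tv_bound_aux (y : ℝ) (hy : 2 ≤ y) :
    (1 / 2) * ∫ ξ : ℝ, |fNormal (Real.log y) y⁻¹ ξ - fLogGamma y 1 ξ| ≤
      1 / y + (Real.sqrt (2 * Real.pi * y⁻¹))⁻¹ / y := by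
  have hy0 : 0 < y := by linarith
  have iN := integral_fNormal_aux (Real.log y) y⁻¹ (by positivity)
  have iG := integral_fLogGamma_aux y hy0
  have hN : Integrable (fNormal (Real.log y) y⁻¹) := by
    by_contra h
    rw [integral_undef h] at iN
    norm_num at iN
  have hGi : Integrable (fLogGamma y 1) := by
    by_contra h
    rw [integral_undef h] at iG
    norm_num at iG
  have hF : Integrable (fun ξ => cubicTerm y (ξ - Real.log y)) :=
    (cubicTerm_integrable y hy0).comp_sub_right (Real.log y)
  have iF : ∫ ξ, cubicTerm y (ξ - Real.log y) = (Real.sqrt (2 * Real.pi * y⁻¹))⁻¹ / y := by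
    rw [integral_sub_right_eq_self (cubicTerm y), cubicTerm_integral y hy0]
  have hle : ∫ ξ : ℝ, |fNormal (Real.log y) y⁻¹ ξ - fLogGamma y 1 ξ| ≤
      ∫ ξ : ℝ, ((2 * (1 / y) * fNormal (Real.log y) y⁻¹ ξ + 2 * cubicTerm y (ξ - Real.log y))
        - (fNormal (Real.log y) y⁻¹ ξ - fLogGamma y 1 ξ)) := by
    refine integral_mono (hN.sub hGi).abs
      (((hN.const_mul _).add (hF.const_mul _)).sub (hN.sub hGi)) fun ξ => ?_
    have h := pointwise_aux y ξ hy
    have h1 : 0 ≤ cubicTerm y (ξ - Real.log y) := by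
      unfold cubicTerm
      refine Set.indicator_nonneg (fun t ht => ?_) _
      have : (0 : ℝ) < t := ht
      positivity
    have h2 : 0 ≤ (1 / y) * fNormal (Real.log y) y⁻¹ ξ := by
      unfold fNormal
      positivity
    simp only
    rcases abs_cases (fNormal (Real.log y) y⁻¹ ξ - fLogGamma y 1 ξ) with ⟨h3, _⟩ | ⟨h3, _⟩ <;>
    · rw [h3]
      linarith
  have hval : ∫ ξ : ℝ, ((2 * (1 / y) * fNormal (Real.log y) y⁻¹ ξ
        + 2 * cubicTerm y (ξ - Real.log y)) - (fNormal (Real.log y) y⁻¹ ξ - fLogGamma y 1 ξ))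
      = 2 * (1 / y) + 2 * ((Real.sqrt (2 * Real.pi * y⁻¹))⁻¹ / y) := by
    have j1 : Integrable (fun ξ => 2 * (1 / y) * fNormal (Real.log y) y⁻¹ ξ) := hN.const_mul _
    have j2 : Integrable (fun ξ => 2 * cubicTerm y (ξ - Real.log y)) := hF.const_mul _
    have j3 : Integrable (fun ξ => 2 * (1 / y) * fNormal (Real.log y) y⁻¹ ξ
        + 2 * cubicTerm y (ξ - Real.log y)) := j1.add j2
    have j4 : Integrable (fun ξ => fNormal (Real.log y) y⁻¹ ξ - fLogGamma y 1 ξ) := hN.sub hGi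
    rw [integral_sub j3 j4, integral_add j1 j2, integral_sub hN hGi,
      integral_const_mul, integral_const_mul, iN, iG, iF]
    ring
  rw [hval] at hle
  linarith

theorem tv_normal_logGamma_asymptotic :
    ∃ C > (0 : ℝ), ∃ Y₀ > (0 : ℝ), ∀ y : ℝ, Y₀ ≤ y →
      (1 / 2) * ∫ ξ : ℝ, |fNormal (Real.log y) y⁻¹ ξ - fLogGamma y 1 ξ| ≤
        Real.sqrt (5 / (24 * y)) + C * y ^ (-(3 : ℝ) / 2) := by
  refine ⟨1, one_pos, 400, by norm_num, fun y hy => ?_⟩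
  have hy0 : 0 < y := by linarith
  have h := tv_bound_aux y (by linarith)
  have hr : 0 ≤ 1 * y ^ (-(3 : ℝ) / 2) := by positivity
  have hs : 0 < Real.sqrt y := by positivity
  have hsq : Real.sqrt y ^ 2 = y := Real.sq_sqrt hy0.le
  have hs20 : 20 ≤ Real.sqrt y := by
    rw [show (20 : ℝ) = Real.sqrt 400 by
      rw [show (400 : ℝ) = 20 ^ 2 by norm_num, Real.sqrt_sq (by norm_num)]]
    exact Real.sqrt_le_sqrt hy
  have h1 : (9 / 20) / Real.sqrt y ≤ Real.sqrt (5 / (24 * y)) := by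
    apply Real.le_sqrt_of_sq_le
    rw [div_pow, hsq, div_le_div_iff₀ hy0 (by positivity)]
    nlinarith
  have h2 : (Real.sqrt (2 * Real.pi * y⁻¹))⁻¹ ≤ (2 / 5) * Real.sqrt y := by
    have h3 : (5 / 2) / Real.sqrt y ≤ Real.sqrt (2 * Real.pi * y⁻¹) := by
      apply Real.le_sqrt_of_sq_le
      rw [div_pow, hsq, div_eq_mul_inv]
      have := Real.pi_gt_d2
      gcongr
      linarith
    have h4 := inv_anti₀ (by positivity) h3
    refine h4.trans (le_of_eq ?_)
    rw [inv_div]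
    ring
  have h3 : (Real.sqrt (2 * Real.pi * y⁻¹))⁻¹ / y ≤ (2 / 5) / Real.sqrt y := by
    rw [div_le_div_iff₀ hy0 hs]
    nlinarith
  have h4 : 1 / y ≤ (1 / 20) / Real.sqrt y := by
    rw [div_le_div_iff₀ hy0 hs]
    nlinarith
  have h5 : (9 / 20) / Real.sqrt y = (2 / 5) / Real.sqrt y + (1 / 20) / Real.sqrt y := by
    rw [← add_div]
    norm_num
  linarith
end

section
/- For every fixed s > 0, the Kullback–Leibler divergence D(f_Normal(·|log(ys), y⁻¹) ‖ f_logGamma(·|y,s)) between the Gaussian density with mean log(y·s) and variance 1/y and the log-Gamma density with parameters y and s tends to 0 as y → ∞. (Hence the logarithm of a Gamma(y, s) random variable is asymptotically Gaussian with mean log(ys) and variance 1/y for large y.) -/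
open Real MeasureTheory Filter

/-- Convexity bounds comparing `log Gamma` with its value at an integer. -/
theorem stirling_aux (n : ℕ) (hn : 2 ≤ n) (x : ℝ) (hx : 0 ≤ x) (hx1 : x ≤ 1) :
    |(Real.log (Real.Gamma (n + x)) - (n + x - 1 / 2) * Real.log (n + x) + (n + x)) -
      (Real.log (Real.Gamma n) - (n - 1 / 2) * Real.log n + n)| ≤ 2 * ((n : ℝ) - 1)⁻¹ := by
  have hN : (2 : ℝ) ≤ n := by exact_mod_cast hn
  have hfeq : ∀ {y : ℝ}, 0 < y →
      (Real.log ∘ Real.Gamma) (y + 1) = (Real.log ∘ Real.Gamma) y + Real.log y := by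
    intro y hy
    rw [Function.comp_apply, Gamma_add_one hy.ne', log_mul hy.ne' (Gamma_pos_of_pos hy).ne',
      add_comm, Function.comp_apply]
  have hU : Real.log (Real.Gamma (n + x)) ≤ Real.log (Real.Gamma n) + x * Real.log n := by
    rcases hx.eq_or_lt with h | h
    · subst h; simp
    · exact BohrMollerup.f_add_nat_le convexOn_log_Gamma hfeq (by omega) h hx1
  have hL : Real.log (Real.Gamma n) + x * Real.log (n - 1) ≤ Real.log (Real.Gamma (n + x)) := by
    rcases hx.eq_or_lt with h | h
    · subst h; simp
    · exact BohrMollerup.f_add_nat_ge convexOn_log_Gamma hfeq hn h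
  generalize Real.log (Real.Gamma (n + x)) = A at *
  generalize Real.log (Real.Gamma n) = B at *
  generalize (n : ℝ) = N at *
  have hq : Real.log ((N + x) / N) = Real.log (N + x) - Real.log N :=
    Real.log_div (by positivity) (by positivity)
  have hq2 : Real.log (N / (N - 1)) = Real.log N - Real.log (N - 1) :=
    Real.log_div (by positivity) (by linarith)
  have h1 := Real.one_sub_inv_le_log_of_pos (x := (N + x) / N) (by positivity)
  have h2 := Real.log_le_sub_one_of_pos (x := (N + x) / N) (by positivity)
  have h3 := Real.log_le_sub_one_of_pos (x := N / (N - 1)) (div_pos (by linarith) (by linarith))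
  rw [hq] at h1 h2
  rw [hq2] at h3
  have e1 : 1 - ((N + x) / N)⁻¹ = x / (N + x) := by field_simp; ring
  have e2 : (N + x) / N - 1 = x / N := by field_simp; ring
  have e3 : N / (N - 1) - 1 = (N - 1)⁻¹ := by
    have : N - 1 ≠ 0 := by linarith
    field_simp; ring
  rw [e1] at h1
  rw [e2] at h2
  rw [e3] at h3
  generalize Real.log (N + x) = M at *
  generalize Real.log (N - 1) = K at *
  generalize Real.log N = L at *
  have hc : 0 ≤ N + x - 1 / 2 := by linarith
  have k1 := mul_le_mul_of_nonneg_left h1 hc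
  have k2 := mul_le_mul_of_nonneg_left h2 hc
  have k3 := mul_le_mul_of_nonneg_left h3 hx
  have i1 : (N + x - 1 / 2) * (x / (N + x)) = x - x / 2 * (N + x)⁻¹ := by
    have : N + x ≠ 0 := by linarith
    field_simp
  have i2 : (N + x - 1 / 2) * (x / N) = x + x * (x - 1 / 2) * N⁻¹ := by
    have : N ≠ 0 := by linarith
    field_simp; ring
  rw [i1] at k1
  rw [i2] at k2
  have j0 : 0 ≤ (N - 1)⁻¹ := inv_nonneg.2 (by linarith)
  have j1 : (N + x)⁻¹ ≤ (N - 1)⁻¹ := inv_anti₀ (by linarith) (by linarith)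
  have j1' : 0 ≤ (N + x)⁻¹ := inv_nonneg.2 (by linarith)
  have j2 : N⁻¹ ≤ (N - 1)⁻¹ := inv_anti₀ (by linarith) (by linarith)
  have j2' : 0 ≤ N⁻¹ := inv_nonneg.2 (by linarith)
  have m1 : x / 2 * (N + x)⁻¹ ≤ 1 * (N + x)⁻¹ := by gcongr; linarith
  have m2 : x * (x - 1 / 2) * N⁻¹ ≤ 1 * N⁻¹ := by gcongr; nlinarith
  have m3 : x * (N - 1)⁻¹ ≤ 1 * (N - 1)⁻¹ := by gcongr
  rw [abs_le]
  constructor <;> nlinarith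

theorem stirling_nat :
    Tendsto (fun n : ℕ => Real.log (Real.Gamma n) - ((n : ℝ) - 1 / 2) * Real.log n + n) atTop
      (nhds (1 / 2 * Real.log (2 * π))) := by
  have h := (Stirling.tendsto_stirlingSeq_sqrt_pi.log (by positivity)).add_const
    (1 / 2 * Real.log 2)
  have e : Real.log √π + 1 / 2 * Real.log 2 = 1 / 2 * Real.log (2 * π) := by
    rw [Real.log_sqrt pi_pos.le, Real.log_mul (by norm_num) pi_pos.ne']; ring
  rw [e] at h
  refine h.congr' ?_
  filter_upwards [eventually_ge_atTop 1] with n hn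
  have hN : (0 : ℝ) < n := by exact_mod_cast hn
  rw [Stirling.log_stirlingSeq_formula, ← Real.Gamma_nat_eq_factorial, Gamma_add_one hN.ne',
    Real.log_mul hN.ne' (Gamma_pos_of_pos hN).ne', Real.log_mul (by norm_num) hN.ne',
    Real.log_div hN.ne' (exp_pos 1).ne', Real.log_exp]
  ring

theorem stirling_real :
    Tendsto (fun y : ℝ => Real.log (Real.Gamma y) - (y - 1 / 2) * Real.log y + y) atTop
      (nhds (1 / 2 * Real.log (2 * π))) := by
  have h1 := stirling_nat.comp (tendsto_nat_floor_atTop (α := ℝ))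
  have h0 : Tendsto (fun n : ℕ => 2 * ((n : ℝ) - 1)⁻¹) atTop (nhds 0) := by
    have : Tendsto (fun n : ℕ => (n : ℝ) - 1) atTop atTop :=
      tendsto_atTop_add_const_right _ (-1) tendsto_natCast_atTop_atTop
    simpa using this.inv_tendsto_atTop.const_mul 2
  have h2 := h0.comp (tendsto_nat_floor_atTop (α := ℝ))
  have h3 : Tendsto (fun y : ℝ => (Real.log (Real.Gamma y) - (y - 1 / 2) * Real.log y + y) -
      (Real.log (Real.Gamma ⌊y⌋₊) - ((⌊y⌋₊ : ℝ) - 1 / 2) * Real.log ⌊y⌋₊ + ⌊y⌋₊)) atTop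
      (nhds 0) := by
    refine squeeze_zero_norm' ?_ h2
    filter_upwards [eventually_ge_atTop 2] with y hy
    have hf : 2 ≤ ⌊y⌋₊ := Nat.le_floor (by exact_mod_cast hy)
    have a1 := Nat.floor_le (a := y) (by linarith)
    have a2 := Nat.lt_floor_add_one y
    have := stirling_aux ⌊y⌋₊ hf (y - ⌊y⌋₊) (by linarith) (by linarith)
    rw [add_sub_cancel] at this
    exact this
  have h4 := h3.add h1
  rw [zero_add] at h4
  refine h4.congr fun y => ?_
  simp only [Function.comp_apply]
  ring

theorem exp_limit :
    Tendsto (fun y : ℝ => y * (Real.exp (y⁻¹ / 2) - 1)) atTop (nhds (1 / 2)) := by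
  have h : HasDerivAt (fun t : ℝ => Real.exp (t / 2)) (1 / 2) 0 := by
    simpa using ((hasDerivAt_id (0 : ℝ)).div_const 2).exp
  have h2 := h.tendsto_slope_zero_right.comp tendsto_inv_atTop_nhdsGT_zero
  refine h2.congr fun y => ?_
  simp

open ProbabilityTheory in
theorem KL_formula (s y : ℝ) (hs : 0 < s) (hy : 0 < y) :
    KL (fNormal (Real.log (y * s)) y⁻¹) (fLogGamma y s) =
      (Real.log (Real.Gamma y) - (y - 1 / 2) * Real.log y + y) - 1 / 2 * Real.log (2 * π)
      + (y * (Real.exp (y⁻¹ / 2) - 1) - 1 / 2) := by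
  set m := Real.log (y * s) with hm
  have hv0 : (0 : ℝ) < y⁻¹ := inv_pos.2 hy
  set v : NNReal := ⟨y⁻¹, hv0.le⟩ with hv
  have hvc : (v : ℝ) = y⁻¹ := rfl
  have hvne : v ≠ 0 := by
    intro h
    rw [← NNReal.coe_eq_zero, hvc] at h
    exact hv0.ne' h
  have hG := Gamma_pos_of_pos hy
  have hlog : ∀ ξ, Real.log (fNormal m y⁻¹ ξ / fLogGamma y s ξ) =
      (Real.log (Real.Gamma y) + y * Real.log s - 1 / 2 * (Real.log (2 * π) - Real.log y))
      - y / 2 * (ξ - m) ^ 2 - y * ξ + s⁻¹ * Real.exp ξ := by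
    intro ξ
    have hsy : 0 < s ^ y := Real.rpow_pos_of_pos hs y
    have h2 : (0 : ℝ) < 2 * π * y⁻¹ := by positivity
    unfold fNormal fLogGamma
    rw [Real.log_div (by positivity) (by positivity), Real.log_mul (by positivity) (by positivity),
      Real.log_mul (by positivity) (by positivity), Real.log_exp, Real.log_exp, Real.log_inv,
      Real.log_inv, Real.log_sqrt h2.le, Real.log_mul (by positivity) hv0.ne', Real.log_inv,
      Real.log_mul hG.ne' hsy.ne', Real.log_rpow hs]
    field_simp
    ring
  have hKL : KL (fNormal m y⁻¹) (fLogGamma y s) = ∫ ξ,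
      ((Real.log (Real.Gamma y) + y * Real.log s - 1 / 2 * (Real.log (2 * π) - Real.log y))
      - y / 2 * (ξ - m) ^ 2 - y * ξ + s⁻¹ * Real.exp ξ) ∂(gaussianReal m v) := by
    rw [integral_gaussianReal_eq_integral_smul hvne]
    unfold KL
    simp_rw [hlog]
    rfl
  have i1 : Integrable (fun ξ : ℝ => ξ) (gaussianReal m v) :=
    (memLp_id_gaussianReal (μ := m) (v := v) 1).integrable (by simp)
  have i2 : Integrable (fun ξ : ℝ => (ξ - m) ^ 2) (gaussianReal m v) :=
    ((memLp_id_gaussianReal (μ := m) (v := v) 2).sub (memLp_const m)).integrable_sq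
  have i3 : Integrable (fun ξ : ℝ => Real.exp ξ) (gaussianReal m v) := by
    simpa using integrable_exp_mul_gaussianReal (μ := m) (v := v) 1
  have E2 : ∫ ξ, (ξ - m) ^ 2 ∂(gaussianReal m v) = y⁻¹ := by
    have := variance_eq_integral (μ := gaussianReal m v) (X := fun x => x)
      measurable_id'.aemeasurable
    rw [variance_fun_id_gaussianReal, integral_id_gaussianReal] at this
    rw [← this, hvc]
  have E3 : ∫ ξ, Real.exp ξ ∂(gaussianReal m v) = y * s * Real.exp (y⁻¹ / 2) := by
    have := congrFun (mgf_fun_id_gaussianReal (μ := m) (v := v)) 1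
    simp only [mgf, one_mul, mul_one, one_pow, hvc] at this
    rw [this, Real.exp_add, hm, Real.exp_log (by positivity)]
  rw [hKL]
  have key : ∀ C : ℝ, ∫ ξ, (C - y / 2 * (ξ - m) ^ 2 - y * ξ + s⁻¹ * Real.exp ξ)
      ∂(gaussianReal m v) = C - y / 2 * y⁻¹ - y * m + s⁻¹ * (y * s * Real.exp (y⁻¹ / 2)) := by
    intro C
    have j1 : Integrable (fun ξ : ℝ => C - y / 2 * (ξ - m) ^ 2) (gaussianReal m v) :=
      (integrable_const _).sub (i2.const_mul _)
    have j2 : Integrable (fun ξ : ℝ => C - y / 2 * (ξ - m) ^ 2 - y * ξ) (gaussianReal m v) :=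
      j1.sub (i1.const_mul _)
    rw [integral_add j2 (i3.const_mul _), integral_sub j1 (i1.const_mul _),
      integral_sub (integrable_const _) (i2.const_mul _), integral_const_mul, integral_const_mul,
      integral_const_mul, E2, E3, integral_id_gaussianReal]
    simp only [integral_const, probReal_univ, one_smul]
  rw [key, hm, Real.log_mul hy.ne' hs.ne']
  field_simp
  ring

theorem kl_normal_logGamma_scaled_tendsto_zero (s : ℝ) (hs : 0 < s) :
    Tendsto (fun y : ℝ => KL (fNormal (Real.log (y * s)) y⁻¹) (fLogGamma y s))
      atTop (nhds 0) := by
  have h := (stirling_real.sub_const (1 / 2 * Real.log (2 * π))).add (exp_limit.sub_const (1 / 2))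
  rw [sub_self, sub_self, add_zero] at h
  refine h.congr' ?_
  filter_upwards [eventually_gt_atTop 0] with y hy
  exact (KL_formula s y hs hy).symm
end

section
/- (First-order Stirling series for the Gamma function.) log Γ(y) = (y − 1/2)·log y − y + (1/2)·log(2π) + 1/(12y) + O(y⁻²) as y → ∞; precisely, there exist constants C > 0 and Y₀ > 0 such that for all real y ≥ Y₀, |log Γ(y) − ((y − 1/2)·log y − y + (1/2)·log(2π)) − 1/(12y)| ≤ C/y². -/
open Real

noncomputable def stE (y : ℝ) : ℝ :=
  Real.log (Real.Gamma y) -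
          ((y - 1 / 2) * Real.log y - y + (1 / 2) * Real.log (2 * Real.pi)) -
        1 / (12 * y)

lemma stE_diff (y : ℝ) (hy : 0 < y) :
    stE y - stE (y + 1) = (y + 1/2) * Real.log (1 + y⁻¹) - 1 - 1 / (12 * y * (y + 1)) := by
  have h1 : Real.log (Real.Gamma (y + 1)) = Real.log y + Real.log (Real.Gamma y) := by
    rw [Real.Gamma_add_one hy.ne', Real.log_mul hy.ne' (Real.Gamma_pos_of_pos hy).ne']
  have h2 : Real.log (1 + y⁻¹) = Real.log (y + 1) - Real.log y := by
    rw [← Real.log_div (by positivity) hy.ne']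
    congr 1
    field_simp
  unfold stE
  rw [h1, h2]
  have : 1 / (12 * y * (y + 1)) = 1 / (12 * y) - 1 / (12 * (y + 1)) := by
    field_simp
    ring
  rw [this]
  ring

lemma log_series (y : ℝ) (hy : 0 < y) :
    HasSum (fun k : ℕ => 1 / (2 * (k : ℝ) + 1) * ((1 / (2 * y + 1)) ^ 2) ^ k)
      ((y + 1/2) * Real.log (1 + y⁻¹)) := by
  have h := (Real.hasSum_log_one_add_inv hy).mul_left (y + 1/2)
  refine h.congr_fun ?_
  intro k
  have : (2 * y + 1) ≠ 0 := by positivity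
  rw [pow_succ _ (2 * k), pow_mul]
  field_simp

lemma log_lower (y : ℝ) (hy : 0 < y) :
    1 + 1 / (3 * (2 * y + 1) ^ 2) ≤ (y + 1/2) * Real.log (1 + y⁻¹) := by
  have h := sum_le_hasSum (Finset.range 2) (fun i _ => by positivity) (log_series y hy)
  simp only [Finset.sum_range_succ, Finset.sum_range_zero] at h
  refine le_trans (le_of_eq ?_) h
  have : (2 * y + 1) ≠ 0 := by positivity
  norm_num
  ring

lemma log_upper (y : ℝ) (hy : 0 < y) :
    (y + 1/2) * Real.log (1 + y⁻¹) ≤ 1 + 1 / (12 * y * (y + 1)) := by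
  have h := (hasSum_nat_add_iff' 1).2 (log_series y hy)
  set r : ℝ := (1 / (2 * y + 1)) ^ 2 with hr
  have hr0 : 0 ≤ r := by positivity
  have hr1 : r < 1 := by
    rw [hr, div_pow, one_pow, div_lt_one (by positivity)]
    nlinarith
  have g := (hasSum_geometric_of_lt_one hr0 hr1).mul_left (r / 3)
  have := hasSum_le (fun k => ?_) h g
  · simp at this
    have e : r / 3 * (1 - r)⁻¹ = 1 / (12 * y * (y + 1)) := by
      have : (2 * y + 1) ≠ 0 := by positivity
      have h1 : 1 - r = 4 * y * (y + 1) / (2 * y + 1) ^ 2 := by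
        rw [hr]; field_simp; ring
      rw [h1, hr]; field_simp; norm_num
    rw [e] at this
    norm_num at this ⊢
    linarith
  · rw [pow_succ, div_mul_eq_mul_div, mul_comm (r ^ k) r, div_mul_eq_mul_div, one_mul]
    apply div_le_div_of_nonneg_left (by positivity) (by norm_num)
    push_cast
    linarith [(Nat.cast_nonneg k : (0:ℝ) ≤ k)]

lemma stE_step (y : ℝ) (hy : 0 < y) :
    |stE y - stE (y + 1)| ≤ 1 / y ^ 2 - 1 / (y + 1) ^ 2 := by
  rw [stE_diff y hy]
  have h1 := log_lower y hy
  have h2 := log_upper y hy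
  have h3 : 1 / (12 * y * (y + 1)) - 1 / (3 * (2 * y + 1) ^ 2) ≤ 1 / y ^ 2 - 1 / (y + 1) ^ 2 := by
    have e1 : 1 / (12 * y * (y + 1)) - 1 / (3 * (2 * y + 1) ^ 2)
        = 1 / (12 * y * (y + 1) * (2 * y + 1) ^ 2) := by
      field_simp; ring
    have e2 : 1 / y ^ 2 - 1 / (y + 1) ^ 2 = (2 * y + 1) / (y ^ 2 * (y + 1) ^ 2) := by
      field_simp; ring
    rw [e1, e2, div_le_div_iff₀ (by positivity) (by positivity)]
    have : y * (y + 1) ≤ (2 * y + 1) * (12 * (2 * y + 1) ^ 2) := by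
      have : 0 < y ^ 3 := by positivity
      nlinarith
    have := mul_le_mul_of_nonneg_left this (by positivity : 0 ≤ y * (y + 1))
    nlinarith
  rw [abs_le]
  constructor <;> [linarith; skip]
  have : 1 / (y + 1) ^ 2 ≤ 1 / y ^ 2 := by gcongr; linarith
  linarith

lemma stE_iter (y : ℝ) (hy : 0 < y) (n : ℕ) :
    |stE y - stE (y + n)| ≤ 1 / y ^ 2 - 1 / (y + n) ^ 2 := by
  induction n with
  | zero => simp
  | succ n ih =>
    have h := stE_step (y + n) (by positivity)
    have := abs_sub_le (stE y) (stE (y + n)) (stE (y + n + 1))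
    push_cast
    rw [← add_assoc]
    linarith

open Filter Topology

lemma log_Gamma_add (x : ℝ) (hx : 0 < x) (n : ℕ) :
    Real.log (Real.Gamma (x + n)) =
      Real.log (Real.Gamma x) + ∑ m ∈ Finset.range n, Real.log (x + m) := by
  induction n with
  | zero => simp
  | succ n ih =>
    have hp : 0 < x + n := by positivity
    push_cast
    rw [← add_assoc, Real.Gamma_add_one hp.ne', Real.log_mul hp.ne' (Real.Gamma_pos_of_pos hp).ne',
      ih, Finset.sum_range_succ]
    ring

lemma stE_lim (x : ℝ) (hx : 0 < x) :
    Tendsto (fun n : ℕ => stE (x + (n + 1 : ℕ))) atTop (𝓝 0) := by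
  have h1 := Real.BohrMollerup.tendsto_log_gamma hx
  have h2 : Tendsto (fun n : ℕ => Real.log (Stirling.stirlingSeq n)) atTop
      (𝓝 (Real.log (√π))) :=
    Stirling.tendsto_stirlingSeq_sqrt_pi.log (by positivity)
  have hcast := tendsto_natCast_atTop_atTop (R := ℝ)
  have h3 : Tendsto (fun n : ℕ => (n : ℝ) * Real.log (1 + (x + 1) / n)) atTop (𝓝 (x + 1)) :=
    (Real.tendsto_mul_log_one_add_div_atTop (x + 1)).comp hcast
  have h4 : Tendsto (fun n : ℕ => Real.log (1 + (x + 1) / n)) atTop (𝓝 0) := by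
    have : Tendsto (fun n : ℕ => 1 + (x + 1) / (n : ℝ)) atTop (𝓝 (1 + 0)) :=
      tendsto_const_nhds.add (tendsto_const_nhds.div_atTop hcast)
    have := this.log (by norm_num)
    simpa using this
  have h5 : Tendsto (fun n : ℕ => 1 / (12 * (x + (n + 1 : ℕ)))) atTop (𝓝 0) := by
    apply tendsto_const_nhds.div_atTop
    apply Tendsto.const_mul_atTop (by norm_num)
    apply tendsto_atTop_add_const_left
    exact hcast.comp (tendsto_add_atTop_nat 1)
  have key := (((((tendsto_const_nhds (x := Real.log (Real.Gamma x))).sub h1).add h2).sub h3).sub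
    (h4.const_mul (x + 1/2))).sub h5
  have key2 := key.add (tendsto_const_nhds (x := (x + 1) + 1/2 * Real.log 2 - 1/2 * Real.log (2 * π)))
  have e0 : Real.log (Real.Gamma x) - Real.log (Real.Gamma x) + Real.log (√π) - (x + 1)
      - (x + 1/2) * 0 - 0 + ((x + 1) + 1/2 * Real.log 2 - 1/2 * Real.log (2 * π)) = 0 := by
    rw [Real.log_sqrt pi_pos.le, Real.log_mul (by norm_num) pi_pos.ne']
    ring
  rw [e0] at key2
  refine key2.congr' ?_
  filter_upwards [eventually_gt_atTop 0] with n hn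
  have hn' : (0 : ℝ) < n := by exact_mod_cast hn
  have e1 : Real.log (1 + (x + 1) / n) = Real.log (x + (n + 1 : ℕ)) - Real.log n := by
    rw [← Real.log_div (by positivity) hn'.ne']
    congr 1
    push_cast
    field_simp
    ring
  rw [e1, Stirling.log_stirlingSeq_formula, Real.BohrMollerup.logGammaSeq]
  unfold stE
  rw [log_Gamma_add x hx (n + 1), Real.log_mul (by norm_num) hn'.ne', Real.log_div hn'.ne' (by positivity), Real.log_exp]
  push_cast
  ring

theorem stirling_series_first_order :
    ∃ C > (0 : ℝ), ∃ Y₀ > (0 : ℝ), ∀ y : ℝ, Y₀ ≤ y →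
      |Real.log (Real.Gamma y) -
          ((y - 1 / 2) * Real.log y - y + (1 / 2) * Real.log (2 * Real.pi)) -
        1 / (12 * y)| ≤ C / y ^ 2 := by
  refine ⟨1, one_pos, 1, one_pos, fun y hy => ?_⟩
  have hy0 : 0 < y := by linarith
  change |stE y| ≤ 1 / y ^ 2
  have h := ((tendsto_const_nhds (x := stE y)).sub (stE_lim y hy0)).abs
  rw [sub_zero] at h
  refine le_of_tendsto h (Eventually.of_forall fun n => ?_)
  refine (stE_iter y hy0 (n + 1)).trans ?_
  have : 0 ≤ 1 / (y + (n + 1 : ℕ)) ^ 2 := by positivity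
  linarith
end
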